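/- Let P be a trace preserving quantum operation on the N×N complex matrices, i.e. P(X) = ∑_{j=1}^k A_j X A_jᴴ with ∑_{j=1}^k A_jᴴ A_j = I. Then for every density matrix ρ (positive semidefinite with trace 1) the Cesàro means (1/n) ∑_{k=0}^{n-1} P^k(ρ) converge as n → ∞ to a density matrix ρ̄ satisfying P(ρ̄) = ρ̄; in particular 1 is an eigenvalue of P. -/

import Mathlib

open ComplexOrder Matrix Complex Filter Finset

/-!
The theorem is a finite-dimensional mean ergodic theorem for a linear self-map `T` of a compact
convex set `K`, here the set of density matrices.

The Cesàro means `c n` of the orbit of `x ∈ K` stay in `K` by convexity, so by compactness they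
converge as soon as they have only one cluster point. Since `T (c n) - c n = (T ^ n x - x) / n`
tends to `0`, each cluster point is fixed by `T`. Let `B` be the space of vectors with bounded
orbit. As `x ∈ B`, each `c n - x` lies in `(T - 1) B`, which is a finite-dimensional, hence closed,
subspace. The difference of two cluster points is therefore a fixed vector `z = T y - y` with
`y ∈ B`, and `n • z = T ^ n y - y` is bounded in `n`, so `z = 0`.
The argument is `exists_tendsto_cesaro`; compactness of the set of density matrices comes from
the entrywise bound `norm_entry_le_of_density`.
-/

/-- The subspace of vectors whose orbit under `T` is bounded. -/
def boundedOrbit {E : Type*} [NormedAddCommGroup E] [NormedSpace ℝ E] (T : E →ₗ[ℝ] E) :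
    Submodule ℝ E where
  carrier := {y | ∃ C : ℝ, ∀ n : ℕ, ‖(T ^ n) y‖ ≤ C}
  zero_mem' := ⟨0, fun n => by simp⟩
  add_mem' := by
    rintro a b ⟨C, hC⟩ ⟨D, hD⟩
    refine ⟨C + D, fun n => ?_⟩
    rw [map_add]
    exact (norm_add_le _ _).trans (add_le_add (hC n) (hD n))
  smul_mem' := by
    rintro r a ⟨C, hC⟩
    refine ⟨‖r‖ * C, fun n => ?_⟩
    rw [map_smul, norm_smul]
    exact mul_le_mul_of_nonneg_left (hC n) (norm_nonneg r)

lemma map_mem_boundedOrbit {E : Type*} [NormedAddCommGroup E] [NormedSpace ℝ E]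
    (T : E →ₗ[ℝ] E) {y : E} (hy : y ∈ boundedOrbit T) : T y ∈ boundedOrbit T := by
  obtain ⟨C, hC⟩ := hy
  refine ⟨C, fun n => ?_⟩
  simpa [pow_succ] using hC (n + 1)

/-- A fixed vector that is a coboundary `T y - y` of a vector with bounded orbit vanishes,
because `n • z = T ^ n y - y` is bounded in `n`. -/
lemma eq_zero_of_fixed_of_coboundary {E : Type*} [NormedAddCommGroup E] [NormedSpace ℝ E]
    (T : E →ₗ[ℝ] E) {y z : E} (hy : y ∈ boundedOrbit T) (hz : T z = z) (hyz : T y - y = z) :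
    z = 0 := by
  obtain ⟨C, hC⟩ := hy
  have hTn : ∀ n : ℕ, (T ^ n) y = y + (n : ℝ) • z := by
    intro n
    induction n with
    | zero => simp
    | succ n ih =>
      rw [pow_succ', Module.End.mul_apply, ih, map_add, map_smul, hz, ← sub_add_cancel (T y) y,
        hyz]
      push_cast
      module
  by_contra hne
  have hpos : 0 < ‖z‖ := norm_pos_iff.mpr hne
  obtain ⟨n, hn⟩ := exists_nat_gt ((C + ‖y‖) / ‖z‖)
  rw [div_lt_iff₀ hpos] at hn
  have h1 : ‖(n : ℝ) • z‖ ≤ C + ‖y‖ := by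
    have h2 : (n : ℝ) • z = (T ^ n) y - y := by rw [hTn]; abel
    rw [h2]
    exact (norm_sub_le _ _).trans (add_le_add (hC n) le_rfl)
  rw [norm_smul, Real.norm_natCast] at h1
  linarith

/-- Mean ergodic theorem for a linear self-map of a compact convex set in finite dimension. -/
lemma exists_tendsto_cesaro {E : Type*} [NormedAddCommGroup E] [NormedSpace ℝ E]
    [FiniteDimensional ℝ E] (T : E →ₗ[ℝ] E) {K : Set E} (hK : IsCompact K) (hconv : Convex ℝ K)
    (hT : ∀ y ∈ K, T y ∈ K) {x : E} (hx : x ∈ K) :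
    ∃ y ∈ K, T y = y ∧
      Tendsto (fun n : ℕ => (n : ℝ)⁻¹ • ∑ i ∈ range n, (T ^ i) x) atTop (nhds y) := by
  set c : ℕ → E := fun n => (n : ℝ)⁻¹ • ∑ i ∈ range n, (T ^ i) x with hc
  have horb : ∀ n : ℕ, (T ^ n) x ∈ K := by
    intro n
    induction n with
    | zero => simpa using hx
    | succ n ih =>
      rw [pow_succ', Module.End.mul_apply]
      exact hT _ ih
  -- `c 0 = 0` need not lie in `K`, so only `n ≥ 1` is considered.
  have hcK : ∀ n : ℕ, 1 ≤ n → c n ∈ K := by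
    intro n hn
    have hn0 : (n : ℝ) ≠ 0 := by positivity
    simp only [hc, Finset.smul_sum]
    refine hconv.sum_mem (fun i _ => by positivity) ?_ (fun i _ => horb i)
    simp [hn0]
  have hev : ∀ᶠ n in atTop, c n ∈ K := (eventually_ge_atTop 1).mono hcK
  obtain ⟨C, hC⟩ := hK.isBounded.exists_norm_le
  have hxB : x ∈ boundedOrbit T := ⟨C, fun n => hC _ (horb n)⟩
  have hdiff : ∀ n : ℕ, T (c n) - c n = (n : ℝ)⁻¹ • ((T ^ n) x - x) := by
    intro n
    have h := Finset.sum_range_sub (fun i => (T ^ i) x) n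
    simp only [pow_zero, Module.End.one_apply] at h
    rw [← h]
    simp only [hc, map_smul, map_sum, ← smul_sub, ← Finset.sum_sub_distrib, pow_succ',
      Module.End.mul_apply]
  have hTc : Continuous T := T.continuous_of_finiteDimensional
  have hlim : Tendsto (fun n => T (c n) - c n) atTop (nhds 0) := by
    simp_rw [hdiff]
    refine NormedField.tendsto_zero_smul_of_tendsto_zero_of_bounded
      (tendsto_inv_atTop_nhds_zero_nat (𝕜 := ℝ)) ?_
    refine isBoundedUnder_of ⟨C + C, fun n => ?_⟩
    exact (norm_sub_le _ _).trans (add_le_add (hC _ (horb n)) (hC _ hx))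
  have hfix : ∀ y, MapClusterPt y atTop c → T y = y := by
    intro y hy
    have h1 : MapClusterPt (T y - y) atTop (fun n => T (c n) - c n) :=
      hy.continuousAt_comp (f := fun w => T w - w) (hTc.sub continuous_id).continuousAt
    have h2 : ClusterPt (T y - y) (nhds (0 : E)) := h1.clusterPt.mono hlim
    have h3 : T y - y = 0 := eq_of_nhds_neBot h2
    exact sub_eq_zero.mp h3
  set W : Submodule ℝ E := (boundedOrbit T).map (T - 1) with hW
  have hWc : IsClosed (W : Set E) := W.closed_of_finiteDimensional
  have hsubW : ∀ i : ℕ, (T ^ i) x ∈ boundedOrbit T ∧ (T ^ i) x - x ∈ W := by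
    intro i
    induction i with
    | zero => exact ⟨by simpa using hxB, by simp⟩
    | succ i ih =>
      rw [pow_succ', Module.End.mul_apply]
      refine ⟨map_mem_boundedOrbit T ih.1, ?_⟩
      rw [← sub_add_sub_cancel _ ((T ^ i) x)]
      exact W.add_mem ⟨_, ih.1, by simp⟩ ih.2
  have hcW : ∀ n : ℕ, 1 ≤ n → c n - x ∈ W := by
    intro n hn
    have hn0 : (n : ℝ) ≠ 0 := by positivity
    have h : c n - x = (n : ℝ)⁻¹ • ∑ i ∈ range n, ((T ^ i) x - x) := by
      simp only [hc, Finset.sum_sub_distrib, smul_sub, Finset.sum_const, card_range]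
      rw [← Nat.cast_smul_eq_nsmul ℝ, inv_smul_smul₀ hn0]
    rw [h]
    exact W.smul_mem _ (W.sum_mem fun i _ => (hsubW i).2)
  have hclW : ∀ y, MapClusterPt y atTop c → y - x ∈ W := by
    intro y hy
    have h1 : MapClusterPt (y - x) atTop (fun n => c n - x) :=
      hy.continuousAt_comp (f := fun w => w - x) (continuous_id.sub continuous_const).continuousAt
    have h2 : ClusterPt (y - x) (𝓟 (W : Set E)) := h1.clusterPt.mono
      (le_principal_iff.mpr ((eventually_ge_atTop 1).mono hcW))
    exact isClosed_iff_clusterPt.mp hWc _ h2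
  obtain ⟨y, hyK, hy⟩ := hK.exists_mapClusterPt (f := atTop) (u := c)
    (le_principal_iff.mpr hev)
  refine ⟨y, hyK, hfix y hy, hK.tendsto_nhds_of_unique_mapClusterPt hev ?_⟩
  intro y' _ hy'
  have hz : y' - y ∈ W := by
    rw [← sub_sub_sub_cancel_right _ _ x]
    exact W.sub_mem (hclW y' hy') (hclW y hy)
  obtain ⟨w, hwB, hw⟩ := hz
  refine sub_eq_zero.mp (eq_zero_of_fixed_of_coboundary T hwB ?_ (by simpa using hw))
  rw [map_sub, hfix y hy, hfix y' hy']

open scoped MatrixOrder Matrix.Norms.L2Operator in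
/-- With `ρ = Bᴴ B`, the trace condition says that the squared moduli of the entries of `B` sum
to `1`, so these entries have modulus at most `1`. -/
lemma norm_entry_le_of_density {N : ℕ} {ρ : Matrix (Fin N) (Fin N) ℂ} (hρ : ρ.PosSemidef)
    (htr : ρ.trace = 1) (i j : Fin N) : ‖ρ i j‖ ≤ N := by
  obtain ⟨B, rfl⟩ : ∃ B : Matrix (Fin N) (Fin N) ℂ, ρ = Bᴴ * B :=
    CStarAlgebra.nonneg_iff_eq_star_mul_self.mp hρ.nonneg
  have hsum : ∑ b, ∑ a, ‖B a b‖ ^ 2 = 1 := by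
    have h : ((∑ b, ∑ a, ‖B a b‖ ^ 2 : ℝ) : ℂ) = 1 := by
      rw [← htr]
      simp [Matrix.trace, Matrix.mul_apply, Complex.conj_mul']
    exact_mod_cast h
  have hB : ∀ a b, ‖B a b‖ ≤ 1 := by
    intro a b
    have h1 : ‖B a b‖ ^ 2 ≤ ∑ a, ‖B a b‖ ^ 2 :=
      Finset.single_le_sum (f := fun a => ‖B a b‖ ^ 2) (fun _ _ => by positivity) (mem_univ a)
    have h2 : ∑ a, ‖B a b‖ ^ 2 ≤ ∑ b, ∑ a, ‖B a b‖ ^ 2 :=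
      Finset.single_le_sum (f := fun b => ∑ a, ‖B a b‖ ^ 2) (fun _ _ => by positivity)
        (mem_univ b)
    exact (sq_le_one_iff₀ (norm_nonneg _)).mp (by linarith)
  rw [Matrix.mul_apply]
  calc ‖∑ a, Bᴴ i a * B a j‖ ≤ ∑ a, ‖Bᴴ i a * B a j‖ := norm_sum_le _ _
    _ ≤ ∑ _a : Fin N, (1 : ℝ) := by
      refine Finset.sum_le_sum fun a _ => ?_
      rw [norm_mul, Matrix.conjTranspose_apply, norm_star]
      exact mul_le_one₀ (hB a i) (norm_nonneg _) (hB a j)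
    _ = N := by simp

/-- The set of `N × N` density matrices. -/
def densityMatrices (N : ℕ) : Set (Matrix (Fin N) (Fin N) ℂ) :=
  {ρ | ρ.PosSemidef ∧ ρ.trace = 1}

lemma convex_densityMatrices (N : ℕ) : Convex ℝ (densityMatrices N) := by
  rintro ρ ⟨hρ, hρt⟩ σ ⟨hσ, hσt⟩ a b ha hb hab
  refine ⟨(hρ.smul ha).add (hσ.smul hb), ?_⟩
  rw [Matrix.trace_add, Matrix.trace_smul, Matrix.trace_smul, hρt, hσt, ← add_smul, hab, one_smul]

lemma isCompact_densityMatrices (N : ℕ) : IsCompact (densityMatrices N) := by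
  have hbox : IsCompact (Set.univ.pi fun _ : Fin N => Set.univ.pi fun _ : Fin N =>
      Metric.closedBall (0 : ℂ) N) :=
    isCompact_univ_pi fun _ => isCompact_univ_pi fun _ => isCompact_closedBall _ _
  refine IsCompact.of_isClosed_subset (X := Matrix (Fin N) (Fin N) ℂ) hbox ?_ ?_
  · have h : densityMatrices N = {ρ | ρᴴ = ρ} ∩
        (⋂ v : Fin N → ℂ, {ρ | 0 ≤ star v ⬝ᵥ (ρ *ᵥ v)}) ∩ {ρ | ρ.trace = 1} := by
      ext ρ
      simp [densityMatrices, Matrix.posSemidef_iff_dotProduct_mulVec, Matrix.IsHermitian]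
    rw [h]
    refine ((isClosed_eq (by fun_prop) (by fun_prop)).inter (isClosed_iInter fun v => ?_)).inter
      (isClosed_eq (by fun_prop) (by fun_prop))
    exact isClosed_le continuous_const (by fun_prop)
  · rintro ρ ⟨hρ, htr⟩ i _ j _
    simpa using norm_entry_le_of_density hρ htr i j

/-- For a trace preserving quantum operation `P(X) = ∑ j, A j * X * (A j)ᴴ`
(with `∑ j, (A j)ᴴ * A j = 1`), the Cesàro means of the iterates applied to any density
matrix converge to a density matrix fixed by `P`; in particular `1` is an eigenvalue of `P`. -/
theorem cesaro_limit_of_trace_preserving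
    (N k : ℕ) (hN : 1 ≤ N) (A : Fin k → Matrix (Fin N) (Fin N) ℂ)
    (P : Matrix (Fin N) (Fin N) ℂ → Matrix (Fin N) (Fin N) ℂ)
    (hP : ∀ X, P X = ∑ j, A j * X * (A j)ᴴ)
    (htp : ∑ j, (A j)ᴴ * A j = 1) :
    (∀ ρ : Matrix (Fin N) (Fin N) ℂ, ρ.PosSemidef → ρ.trace = 1 →
      ∃ ρbar : Matrix (Fin N) (Fin N) ℂ, ρbar.PosSemidef ∧ ρbar.trace = 1 ∧ P ρbar = ρbar ∧
        Filter.Tendsto (fun n : ℕ => (n : ℂ)⁻¹ • ∑ i ∈ Finset.range n, P^[i] ρ)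
          Filter.atTop (nhds ρbar)) ∧
    (∃ X : Matrix (Fin N) (Fin N) ℂ, X ≠ 0 ∧ P X = X) := by
  have key : ∀ ρ : Matrix (Fin N) (Fin N) ℂ, ρ.PosSemidef → ρ.trace = 1 →
      ∃ ρbar : Matrix (Fin N) (Fin N) ℂ, ρbar.PosSemidef ∧ ρbar.trace = 1 ∧ P ρbar = ρbar ∧
        Filter.Tendsto (fun n : ℕ => (n : ℂ)⁻¹ • ∑ i ∈ Finset.range n, P^[i] ρ)
          Filter.atTop (nhds ρbar) := by
    intro ρ hρ hρt
    let T : Matrix (Fin N) (Fin N) ℂ →ₗ[ℝ] Matrix (Fin N) (Fin N) ℂ :=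
      { toFun := P
        map_add' := fun X Y => by
          simp only [hP, Matrix.mul_add, Matrix.add_mul, Finset.sum_add_distrib]
        map_smul' := fun r X => by
          simp only [hP, Matrix.mul_smul, Matrix.smul_mul, Finset.smul_sum, RingHom.id_apply] }
    have hT : ∀ X ∈ densityMatrices N, T X ∈ densityMatrices N := by
      rintro X ⟨hX, hXt⟩
      change P X ∈ densityMatrices N
      rw [hP]
      refine ⟨Matrix.posSemidef_sum _ fun j _ => hX.mul_mul_conjTranspose_same (A j), ?_⟩
      rw [Matrix.trace_sum]
      rw [Finset.sum_congr rfl fun j _ => Matrix.trace_mul_cycle (A j) X (A j)ᴴ]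
      rw [← Matrix.trace_sum, ← Finset.sum_mul, htp, one_mul, hXt]
    -- The sup norm induces the entrywise topology definitionally; any norm would do.
    let : NormedAddCommGroup (Matrix (Fin N) (Fin N) ℂ) := Matrix.normedAddCommGroup
    let : NormedSpace ℝ (Matrix (Fin N) (Fin N) ℂ) := Matrix.normedSpace
    obtain ⟨y, hy, hTy, hlim⟩ := exists_tendsto_cesaro T (isCompact_densityMatrices N)
      (convex_densityMatrices N) hT (x := ρ) ⟨hρ, hρt⟩
    refine ⟨y, hy.1, hy.2, hTy, ?_⟩
    refine hlim.congr fun n => ?_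
    have hpow : ∀ i : ℕ, (T ^ i) ρ = P^[i] ρ := fun i => by rw [Module.End.pow_apply]; rfl
    simp only [hpow]
    ext a b
    simp [Matrix.smul_apply]
  refine ⟨key, ?_⟩
  have hN0 : (N : ℝ) ≠ 0 := by positivity
  obtain ⟨X, -, hXt, hX, -⟩ := key ((N : ℝ)⁻¹ • (1 : Matrix (Fin N) (Fin N) ℂ))
    (Matrix.PosSemidef.one.smul (by positivity))
    (by
      have hNc : (N : ℂ) ≠ 0 := by exact_mod_cast hN0
      simp [Matrix.trace_smul, hNc])
  refine ⟨X, ?_, hX⟩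
  rintro rfl
  simp at hXt
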